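/- Let K = (k_1,…,k_r) be positive integers, not all equal to 1, and let B = {j ∈ {1,…,r} : k_j = 1}. Then in ℝ[T]: Σ_{Π ∈ P(r)} c̄(Π) · H(K;Π;T) = Σ_{A ⊆ B} Σ_{Δ ∈ P_B({1,…,r}∖A)} c̄(Δ) · (∏_{Q ∈ Δ} ζ(Σ_{q ∈ Q} k_q)) · G_{|A|}(T), where for s ≥ 0, G_s(T) = s! · Σ (∏_{m=2}^{s} (ζ(m)/m)^{i_m} / i_m!) · T^j / j!, the sum over all tuples (j, i_2, …, i_s) of nonnegative integers with j + Σ_{m=2}^s m·i_m = s (G_s(T) is the polynomial ρ̄^{-1}(T^s)). -/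

import Mathlib

open Finset

open scoped Classical

/-- The Riemann zeta value `ζ(m) = Σ_{n ≥ 1} 1/n^m`. -/
noncomputable def zetaVal (m : ℕ) : ℝ := ∑' n : ℕ, 1 / ((n : ℝ) + 1) ^ m

/-- `E(k;T) ∈ ℝ[T]`: the constant polynomial `ζ(k)` if `k ≥ 2`, the variable `T` if `k = 1`. -/
noncomputable def Epoly (k : ℕ) : Polynomial ℝ :=
  if k = 1 then Polynomial.X else Polynomial.C (zetaVal k)

/-- The set of partitions of a finite set `S`: sets of nonempty pairwise disjoint
subsets (blocks) of `S` whose union is `S`. -/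
noncomputable def partitionsOf {α : Type*} [DecidableEq α] (S : Finset α) :
    Finset (Finset (Finset α)) :=
  S.powerset.powerset.filter (fun π =>
    (∀ P ∈ π, P.Nonempty) ∧
    (∀ P ∈ π, ∀ Q ∈ π, P ≠ Q → Disjoint P Q) ∧
    π.biUnion id = S)

/-- `P_B(C)`: the set of partitions of `C` none of whose blocks is contained in `B`. -/
noncomputable def partitionsAvoiding {α : Type*} [DecidableEq α] (B C : Finset α) :
    Finset (Finset (Finset α)) :=
  (partitionsOf C).filter (fun Δ => ∀ Q ∈ Δ, ¬ Q ⊆ B)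

/-- `c̄(Π) = ∏_{P ∈ Π} (|P| - 1)!`, with `c̄(∅) = 1`. -/
def cbar {α : Type*} (π : Finset (Finset α)) : ℕ :=
  ∏ P ∈ π, (P.card - 1).factorial

/-- The harmonic-type polynomial `H(K;Π;T) = ∏_{P ∈ Π} E(Σ_{p ∈ P} k_p; T)`. -/
noncomputable def Hpoly {r : ℕ} (k : Fin r → ℕ) (π : Finset (Finset (Fin r))) :
    Polynomial ℝ :=
  ∏ P ∈ π, Epoly (∑ p ∈ P, k p)

/-- `G_s(T) = s! Σ (∏_{m=2}^s (ζ(m)/m)^{i_m}/i_m!) T^j/j!`, the sum over tuples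
`(j, i_2, …, i_s)` of nonnegative integers with `j + Σ_{m=2}^s m·i_m = s`
(this is the polynomial `ρ̄⁻¹(T^s)`).
Tuples are encoded as pairs `(j, i)` with `i : Fin (s+1) → ℕ` supported on indices
`m ≥ 2` (the values `i 0`, `i 1` are forced to be `0`); the bound `i m ≤ s` is
automatic, so ranging over `{0,…,s}` captures all tuples. -/
noncomputable def Gpoly (s : ℕ) : Polynomial ℝ :=
  (s.factorial : Polynomial ℝ) *
    ∑ j ∈ Finset.range (s + 1),
      ∑ i ∈ (Fintype.piFinset fun _ : Fin (s + 1) => Finset.range (s + 1)).filter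
          (fun i => (∀ m : Fin (s + 1), m.1 < 2 → i m = 0) ∧
            j + ∑ m : Fin (s + 1), m.1 * i m = s),
        (∏ m : Fin (s + 1),
            Polynomial.C ((zetaVal m.1 / (m.1 : ℝ)) ^ i m / ((i m).factorial : ℝ))) *
          (Polynomial.X ^ j * Polynomial.C ((j.factorial : ℝ)⁻¹))


theorem mem_po {α : Type*} [DecidableEq α] {S : Finset α} {π : Finset (Finset α)} :
    π ∈ partitionsOf S ↔ (∀ P ∈ π, P.Nonempty) ∧
      (∀ P ∈ π, ∀ Q ∈ π, P ≠ Q → Disjoint P Q) ∧ π.biUnion id = S := by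
  unfold partitionsOf
  rw [Finset.mem_filter, and_iff_right_iff_imp]
  rintro ⟨_, _, h⟩
  simp only [Finset.mem_powerset]
  intro P hP
  rw [Finset.mem_powerset, ← h]
  exact Finset.subset_biUnion_of_mem id hP

theorem po_union {α : Type*} [DecidableEq α] {A C : Finset α} {σ τ : Finset (Finset α)}
    (hσ : σ ∈ partitionsOf A) (hτ : τ ∈ partitionsOf C) (h : Disjoint A C) :
    σ ∪ τ ∈ partitionsOf (A ∪ C) := by
  rw [mem_po] at *
  obtain ⟨a1, a2, rfl⟩ := hσ
  obtain ⟨b1, b2, rfl⟩ := hτ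
  refine ⟨?_, ?_, ?_⟩
  · intro P hP
    rcases Finset.mem_union.1 hP with hP | hP
    exacts [a1 P hP, b1 P hP]
  · intro P hP Q hQ hne
    rcases Finset.mem_union.1 hP with hP | hP <;> rcases Finset.mem_union.1 hQ with hQ | hQ
    · exact a2 P hP Q hQ hne
    · exact h.mono (Finset.subset_biUnion_of_mem id hP) (Finset.subset_biUnion_of_mem id hQ)
    · exact (h.mono (Finset.subset_biUnion_of_mem id hQ) (Finset.subset_biUnion_of_mem id hP)).symm
    · exact b2 P hP Q hQ hne
  · exact Finset.union_biUnion

theorem po_sub {α : Type*} [DecidableEq α] {S : Finset α} {π τ : Finset (Finset α)}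
    (hπ : π ∈ partitionsOf S) (hτ : τ ⊆ π) : τ ∈ partitionsOf (τ.biUnion id) := by
  rw [mem_po] at *
  exact ⟨fun P hP => hπ.1 P (hτ hP), fun P hP Q hQ => hπ.2.1 P (hτ hP) Q (hτ hQ), rfl⟩

theorem po_split {α : Type*} [DecidableEq α] {R : Type*} [CommSemiring R]
    (S : Finset α) (p : Finset α → Prop) (f : Finset α → R) :
    ∑ π ∈ partitionsOf S, ∏ P ∈ π, f P =
      ∑ A ∈ S.powerset, (∑ Δ ∈ (partitionsOf (S \ A)).filter (fun Δ => ∀ P ∈ Δ, ¬ p P), ∏ P ∈ Δ, f P) *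
        (∑ σ ∈ (partitionsOf A).filter (fun σ => ∀ P ∈ σ, p P), ∏ P ∈ σ, f P) := by
  simp only [Finset.sum_mul_sum, ← Finset.sum_product']
  rw [Finset.sum_sigma']
  refine Finset.sum_bij' (fun π _ => ⟨(π.filter p).biUnion id, (π.filter (fun P => ¬ p P), π.filter p)⟩)
    (fun x _ => x.2.1 ∪ x.2.2) ?_ ?_ ?_ ?_ ?_
  · intro π hπ
    have h := mem_po.1 hπ
    have e : S \ (π.filter p).biUnion id = (π.filter (fun P => ¬ p P)).biUnion id := by
      rw [← h.2.2]
      ext x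
      simp only [Finset.mem_sdiff, Finset.mem_biUnion, Finset.mem_filter, id]
      constructor
      · rintro ⟨⟨P, hP, hx⟩, h2⟩
        exact ⟨P, ⟨hP, fun hp => h2 ⟨P, ⟨hP, hp⟩, hx⟩⟩, hx⟩
      · rintro ⟨P, ⟨hP, hp⟩, hx⟩
        refine ⟨⟨P, hP, hx⟩, ?_⟩
        rintro ⟨Q, ⟨hQ, hq⟩, hx'⟩
        by_cases hne : P = Q
        · exact hp (hne ▸ hq)
        · exact Finset.disjoint_left.1 (h.2.1 P hP Q hQ hne) hx hx'
    simp only [Finset.mem_sigma, Finset.mem_powerset, Finset.mem_product, Finset.mem_filter]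
    refine ⟨?_, ⟨?_, fun P hP => hP.2⟩, ?_, fun P hP => hP.2⟩
    · rw [← h.2.2]
      exact Finset.biUnion_subset_biUnion_of_subset_left _ (Finset.filter_subset _ _)
    · rw [e]
      exact po_sub hπ (Finset.filter_subset _ _)
    · exact po_sub hπ (Finset.filter_subset _ _)
  · rintro ⟨A, Δ, σ⟩ hx
    simp only [Finset.mem_sigma, Finset.mem_powerset, Finset.mem_product, Finset.mem_filter] at hx
    have := po_union hx.2.1.1 hx.2.2.1 Finset.sdiff_disjoint
    rwa [Finset.sdiff_union_of_subset hx.1] at this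
  · intro π hπ
    simp only
    rw [Finset.union_comm]
    exact Finset.filter_union_filter_not_eq _ _
  · rintro ⟨A, Δ, σ⟩ hx
    simp only [Finset.mem_sigma, Finset.mem_powerset, Finset.mem_product, Finset.mem_filter] at hx
    obtain ⟨h1, ⟨h2, h3⟩, h4, h5⟩ := hx
    have e1 : (Δ ∪ σ).filter p = σ := by
      ext P; simp only [Finset.mem_filter, Finset.mem_union]
      have := h3 P; have := h5 P; tauto
    have e2 : (Δ ∪ σ).filter (fun P => ¬ p P) = Δ := by
      ext P; simp only [Finset.mem_filter, Finset.mem_union]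
      have := h3 P; have := h5 P; tauto
    simp only [e1, e2, (mem_po.1 h4).2.2]
  · intro π hπ
    simp only
    rw [mul_comm]
    exact (Finset.prod_filter_mul_prod_filter_not _ _ _).symm

theorem po_rec {α : Type*} [DecidableEq α] {R : Type*} [CommSemiring R]
    (S : Finset α) (a : α) (ha : a ∉ S) (f : Finset α → R) :
    ∑ π ∈ partitionsOf (insert a S), ∏ P ∈ π, f P =
      ∑ Q ∈ S.powerset, f (insert a Q) * ∑ π ∈ partitionsOf (S \ Q), ∏ P ∈ π, f P := by
  obtain ⟨p, hp⟩ : ∃ p : Finset α → Prop, ∀ P, p P ↔ a ∈ P := ⟨_, fun _ => Iff.rfl⟩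
  rw [po_split (insert a S) p f, Finset.sum_powerset_insert ha]
  have z : ∑ A ∈ S.powerset, (∑ Δ ∈ (partitionsOf (insert a S \ A)).filter
      (fun Δ => ∀ P ∈ Δ, ¬ p P), ∏ P ∈ Δ, f P) *
        (∑ σ ∈ (partitionsOf A).filter (fun σ => ∀ P ∈ σ, p P), ∏ P ∈ σ, f P) = 0 := by
    apply Finset.sum_eq_zero
    intro A hA
    rw [Finset.filter_eq_empty_iff.2, Finset.sum_empty, zero_mul]
    intro Δ hΔ hn
    have h := (mem_po.1 hΔ).2.2
    have : a ∈ Δ.biUnion id := by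
      rw [h]
      simp only [Finset.mem_sdiff, Finset.mem_insert, true_or, true_and]
      exact fun h' => ha (Finset.mem_powerset.1 hA h')
    obtain ⟨P, hP, haP⟩ := Finset.mem_biUnion.1 this
    exact hn P hP ((hp P).2 haP)
  rw [z, zero_add]
  apply Finset.sum_congr rfl
  intro Q hQ
  have hQ' := Finset.mem_powerset.1 hQ
  have e : insert a S \ insert a Q = S \ Q := by
    ext x
    simp only [Finset.mem_sdiff, Finset.mem_insert]
    constructor
    · tauto
    · rintro ⟨h1, h2⟩
      refine ⟨Or.inr h1, ?_⟩
      rintro (rfl | h)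
      exacts [ha h1, h2 h]
  rw [e, mul_comm]
  congr 1
  · have : (partitionsOf (insert a Q)).filter (fun σ => ∀ P ∈ σ, p P) = {{insert a Q}} := by
      ext σ
      rw [Finset.mem_filter, Finset.mem_singleton, mem_po]
      constructor
      · rintro ⟨⟨h1, h2, h3⟩, h4⟩
        have : a ∈ σ.biUnion id := by rw [h3]; exact Finset.mem_insert_self _ _
        obtain ⟨P, hP, haP⟩ := Finset.mem_biUnion.1 this
        have hs : σ = {P} := by
          rw [Finset.eq_singleton_iff_unique_mem]
          refine ⟨hP, fun P' hP' => ?_⟩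
          by_contra hne
          exact Finset.disjoint_left.1 (h2 P' hP' P hP hne) ((hp _).1 (h4 P' hP')) haP
        rw [hs, Finset.singleton_biUnion] at h3
        rw [hs, ← h3]; rfl
      · rintro rfl
        simp [hp]
    rw [this]; simp
  · congr 1
    apply Finset.filter_true_of_mem
    intro Δ hΔ P hP haP
    rw [hp] at haP
    have h : a ∈ Δ.biUnion id := Finset.mem_biUnion.2 ⟨P, hP, haP⟩
    rw [(mem_po.1 hΔ).2.2] at h
    exact ha (Finset.mem_sdiff.1 h).1

theorem po_empty {α : Type*} [DecidableEq α] : partitionsOf (∅ : Finset α) = {∅} := by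
  ext σ
  rw [Finset.mem_singleton, mem_po]
  constructor
  · rintro ⟨h1, h2, h3⟩
    apply Finset.eq_empty_of_forall_notMem
    intro P hP
    obtain ⟨x, hx⟩ := h1 P hP
    have : x ∈ σ.biUnion id := Finset.mem_biUnion.2 ⟨P, hP, hx⟩
    rw [h3] at this; simp at this
  · rintro rfl; simp

theorem po_card {α : Type*} [DecidableEq α] {R : Type*} [CommSemiring R]
    (E g : ℕ → R) (N : ℕ) (h0 : g 0 = 1)
    (hg : ∀ n < N, ((n + 1 : ℕ) : R) * g (n + 1) = ∑ j ∈ Finset.range (n + 1), E (j + 1) * g (n - j)) :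
    ∀ n ≤ N, ∀ S : Finset α, S.card = n →
      ∑ π ∈ partitionsOf S, ∏ P ∈ π, (((P.card - 1).factorial : ℕ) : R) * E P.card
        = (n.factorial : R) * g n := by
  intro n
  induction n using Nat.strong_induction_on with
  | _ n ih =>
  intro hn S hS
  cases n with
  | zero =>
    rw [Finset.card_eq_zero] at hS
    subst hS
    rw [po_empty]; simp [h0]
  | succ n =>
    obtain ⟨a, T, haT, rfl, hT⟩ := Finset.card_eq_succ.1 hS
    rw [po_rec T a haT]
    have : ∀ Q ∈ T.powerset, (((((insert a Q).card - 1).factorial : ℕ) : R) * E (insert a Q).card) *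
        ∑ π ∈ partitionsOf (T \ Q), ∏ P ∈ π, (((P.card - 1).factorial : ℕ) : R) * E P.card
        = (fun j => ((j.factorial : ℕ) : R) * E (j+1) * (((n - j).factorial : R) * g (n - j))) Q.card := by
      intro Q hQ
      have hQ' := Finset.mem_powerset.1 hQ
      rw [Finset.card_insert_of_notMem (fun h => haT (hQ' h)),
        ih (n - Q.card) (by omega) (by omega) (T \ Q) (by rw [Finset.card_sdiff_of_subset hQ', hT])]
      simp
    rw [Finset.sum_congr rfl this, Finset.sum_powerset_apply_card
      (fun j => ((j.factorial : ℕ) : R) * E (j+1) * (((n - j).factorial : R) * g (n - j))), hT, Nat.factorial_succ]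
    push_cast
    have h2 := hg n (by omega)
    push_cast at h2
    rw [mul_comm ((n : R) + 1), mul_assoc, h2, Finset.mul_sum]
    apply Finset.sum_congr rfl
    intro j hj
    have hj' : j ≤ n := by simpa [Nat.lt_succ_iff] using hj
    rw [nsmul_eq_mul, ← Nat.choose_mul_factorial_mul_factorial hj']
    push_cast
    ring

theorem po_subset {α : Type*} [DecidableEq α] {R : Type*} [CommSemiring R]
    (S B : Finset α) (hBS : B ⊆ S) (f : Finset α → R) :
    ∑ π ∈ partitionsOf S, ∏ P ∈ π, f P =
      ∑ A ∈ B.powerset, (∑ Δ ∈ partitionsAvoiding B (S \ A), ∏ P ∈ Δ, f P) *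
        (∑ σ ∈ partitionsOf A, ∏ P ∈ σ, f P) := by
  obtain ⟨p, hp⟩ : ∃ p : Finset α → Prop, ∀ P, p P ↔ P ⊆ B := ⟨_, fun _ => Iff.rfl⟩
  rw [po_split S p]
  symm
  refine Finset.sum_subset_zero_on_sdiff (Finset.powerset_mono.2 hBS) ?_ ?_
  · intro A hA
    rw [Finset.mem_sdiff, Finset.mem_powerset, Finset.mem_powerset] at hA
    have : (partitionsOf A).filter (fun σ => ∀ P ∈ σ, p P) = ∅ := by
      rw [Finset.filter_eq_empty_iff]
      intro σ hσ h
      apply hA.2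
      rw [← (mem_po.1 hσ).2.2]
      exact Finset.biUnion_subset.2 fun P hP => (hp P).1 (h P hP)
    rw [this, Finset.sum_empty, mul_zero]
  · intro A hA
    rw [Finset.mem_powerset] at hA
    congr 1
    · refine Finset.sum_congr ?_ (fun _ _ => rfl)
      ext Δ
      simp only [partitionsAvoiding, Finset.mem_filter, hp]
    · have hsub : ∀ σ ∈ partitionsOf A, ∀ P ∈ σ, P ⊆ B := by
        intro σ hσ P hP
        refine subset_trans ?_ hA
        rw [← (mem_po.1 hσ).2.2]
        exact Finset.subset_biUnion_of_mem id hP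
      rw [Finset.filter_true_of_mem (fun σ hσ P hP => (hp P).2 (hsub σ hσ P hP))]

theorem avoid_not_subset {α : Type*} [DecidableEq α] {B C : Finset α} {Δ : Finset (Finset α)}
    (h : Δ ∈ partitionsAvoiding B C) : ∀ Q ∈ Δ, ¬ Q ⊆ B := by
  rw [partitionsAvoiding, Finset.mem_filter] at h
  exact h.2

noncomputable def WSet (N t : ℕ) : Finset (Fin (N + 1) → ℕ) :=
  (Fintype.piFinset fun _ : Fin (N + 1) => Finset.range (N + 1)).filter
    (fun i => i 0 = 0 ∧ ∑ m : Fin (N + 1), m.1 * i m = t)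

theorem mem_WSet {N t : ℕ} (h : t ≤ N) {i : Fin (N + 1) → ℕ} :
    i ∈ WSet N t ↔ i 0 = 0 ∧ ∑ m : Fin (N + 1), m.1 * i m = t := by
  unfold WSet
  rw [Finset.mem_filter, and_iff_right_iff_imp]
  rintro ⟨h0, hs⟩
  rw [Fintype.mem_piFinset]
  intro m
  rw [Finset.mem_range]
  by_cases hm : m = 0
  · subst hm; omega
  · have h1 : m.1 * i m ≤ t := by
      rw [← hs]
      exact Finset.single_le_sum (f := fun m : Fin (N+1) => m.1 * i m)
        (fun _ _ => Nat.zero_le _) (Finset.mem_univ m)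
    have h2 : 1 ≤ m.1 := by
      have : m.1 ≠ 0 := fun h => hm (Fin.ext h)
      omega
    have := Nat.mul_le_mul_right (i m) h2
    omega

noncomputable def wfac (m n : ℕ) : Polynomial ℝ :=
  Polynomial.C ((n.factorial : ℝ)⁻¹) * (Polynomial.C ((m : ℝ)⁻¹) * Epoly m) ^ n

noncomputable def Wsum (N t : ℕ) : Polynomial ℝ :=
  ∑ i ∈ WSet N t, ∏ m : Fin (N + 1), wfac m.1 (i m)

theorem wfac_succ (m n : ℕ) (hm : 1 ≤ m) :
    ((m * (n + 1) : ℕ) : Polynomial ℝ) * wfac m (n + 1) = Epoly m * wfac m n := by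
  unfold wfac
  have h1 : (m : ℝ) ≠ 0 := by positivity
  have h2 : ((n : ℝ) + 1) ≠ 0 := by positivity
  have h3 : (n.factorial : ℝ) ≠ 0 := by positivity
  have e : (Polynomial.C ((m * (n + 1) : ℕ) : ℝ)) * Polynomial.C (((n+1).factorial : ℝ)⁻¹) *
      Polynomial.C ((m : ℝ)⁻¹) = Polynomial.C ((n.factorial : ℝ)⁻¹) := by
    rw [← Polynomial.C_mul, ← Polynomial.C_mul]
    congr 1
    rw [Nat.factorial_succ]
    push_cast
    field_simp
  rw [← e, ← Polynomial.C_eq_natCast, pow_succ]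
  ring

theorem Wsum_term (N n : ℕ) (hn : n < N) (m : Fin (N + 1)) :
    ∑ i ∈ WSet N (n + 1), ((m.1 * i m : ℕ) : Polynomial ℝ) * ∏ l : Fin (N + 1), wfac l.1 (i l)
      = if 1 ≤ m.1 ∧ m.1 ≤ n + 1 then Epoly m.1 * Wsum N (n + 1 - m.1) else 0 := by
  split_ifs with hm
  · unfold Wsum
    rw [Finset.mul_sum]
    symm
    have hsum : ∀ i : Fin (N+1) → ℕ, ∑ l : Fin (N + 1), l.1 * (i + (Pi.single m 1 : Fin (N + 1) → ℕ)) l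
        = ∑ l : Fin (N + 1), l.1 * i l + m.1 := by
      intro i
      simp [mul_add, Finset.sum_add_distrib, Pi.single_apply]
    have hm0 : (0 : Fin (N+1)) ≠ m := by
      rintro rfl
      simp at hm
    refine Finset.sum_of_injOn (fun i => i + Pi.single m 1) ?_ ?_ ?_ ?_
    · intro a _ b _ h
      exact add_left_injective _ h
    · intro i hi
      rw [Finset.mem_coe, mem_WSet (by omega)] at hi
      rw [Finset.mem_coe, mem_WSet (by omega), hsum, hi.2]
      refine ⟨?_, by omega⟩
      simp [hi.1, hm0]
    · intro i hi hni
      have : i m = 0 := by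
        by_contra hne
        apply hni
        have e : (i - Pi.single m 1) + Pi.single m 1 = i := by
          ext l
          by_cases hl : l = m
          · subst hl; simp; omega
          · simp [hl]
        refine ⟨i - Pi.single m 1, ?_, e⟩
        rw [mem_WSet (by omega)] at hi
        rw [Finset.mem_coe, mem_WSet (by omega)]
        have := hsum (i - Pi.single m 1)
        rw [e, hi.2] at this
        refine ⟨?_, by omega⟩
        simp [hi.1]
      simp [this]
    · intro i hi
      rw [← Finset.mul_prod_erase _ _ (Finset.mem_univ m),
        ← Finset.mul_prod_erase Finset.univ (fun l => wfac l.1 ((i + (Pi.single m 1 : Fin (N + 1) → ℕ)) l))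
          (Finset.mem_univ m), ← mul_assoc, ← mul_assoc]
      have e : (i + (Pi.single m 1 : Fin (N + 1) → ℕ)) m = i m + 1 := by simp
      simp only [e]
      rw [wfac_succ _ _ hm.1]
      congr 1
      apply Finset.prod_congr rfl
      intro l hl
      have := Finset.ne_of_mem_erase hl
      simp [this]
  · apply Finset.sum_eq_zero
    intro i hi
    rw [mem_WSet (by omega)] at hi
    have h1 : m.1 * i m ≤ n + 1 := by
      rw [← hi.2]
      exact Finset.single_le_sum (f := fun m : Fin (N+1) => m.1 * i m)
        (fun _ _ => Nat.zero_le _) (Finset.mem_univ m)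
    have : m.1 * i m = 0 := by
      by_contra hne
      have h3 : 1 ≤ m.1 := Nat.pos_of_ne_zero (fun h => hne (by simp [h]))
      have h4 : 1 ≤ i m := Nat.pos_of_ne_zero (fun h => hne (by simp [h]))
      have := Nat.mul_le_mul_left m.1 h4
      omega
    simp only [this, Nat.cast_zero, zero_mul]

theorem Wsum_rec (N n : ℕ) (hn : n < N) :
    ((n + 1 : ℕ) : Polynomial ℝ) * Wsum N (n + 1)
      = ∑ j ∈ Finset.range (n + 1), Epoly (j + 1) * Wsum N (n - j) := by
  have h1 : ((n + 1 : ℕ) : Polynomial ℝ) * Wsum N (n + 1) =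
      ∑ m : Fin (N + 1), ∑ i ∈ WSet N (n + 1),
        ((m.1 * i m : ℕ) : Polynomial ℝ) * ∏ l : Fin (N + 1), wfac l.1 (i l) := by
    rw [Finset.sum_comm, Wsum, Finset.mul_sum]
    apply Finset.sum_congr rfl
    intro i hi
    rw [mem_WSet (by omega)] at hi
    rw [← Finset.sum_mul, ← Nat.cast_sum, hi.2]
  rw [h1, Finset.sum_congr rfl (fun m _ => Wsum_term N n hn m),
    Fin.sum_univ_eq_sum_range (fun m => if 1 ≤ m ∧ m ≤ n + 1 then Epoly m * Wsum N (n + 1 - m) else 0)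
      (N + 1), Finset.sum_range_succ']
  simp only [nonpos_iff_eq_zero, one_ne_zero, false_and, if_false, add_zero]
  symm
  refine Finset.sum_subset_zero_on_sdiff (Finset.range_subset_range.2 (by omega)) ?_ ?_
  · intro x hx
    simp only [Finset.mem_sdiff, Finset.mem_range] at hx
    rw [if_neg (by omega)]
  · intro x hx
    rw [Finset.mem_range] at hx
    rw [if_pos (by omega)]
    congr 2
    omega

theorem Wsum_zero (N : ℕ) : Wsum N 0 = 1 := by
  have : WSet N 0 = {0} := by
    ext i
    rw [mem_WSet (Nat.zero_le _), Finset.mem_singleton]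
    constructor
    · rintro ⟨h0, hs⟩
      rw [Finset.sum_eq_zero_iff] at hs
      ext m
      by_cases hm : m = 0
      · subst hm; exact h0
      · have := hs m (Finset.mem_univ _)
        have h2 : m.1 ≠ 0 := fun h => hm (Fin.ext h)
        simpa [h2] using this
    · rintro rfl; simp
  rw [Wsum, this]
  simp [wfac]

theorem Gpoly_eq (s : ℕ) : Gpoly s = (s.factorial : Polynomial ℝ) * Wsum s s := by
  cases s with
  | zero =>
    rw [Wsum_zero, Gpoly]
    have : ((Fintype.piFinset fun _ : Fin (0 + 1) => Finset.range (0 + 1)).filter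
          (fun i => (∀ m : Fin (0 + 1), m.1 < 2 → i m = 0) ∧
            0 + ∑ m : Fin (0 + 1), m.1 * i m = 0)) = {0} := by
      ext i
      simp [Fintype.mem_piFinset, funext_iff]
    rw [Finset.sum_range_one, this]
    simp
  | succ s =>
    unfold Gpoly Wsum
    congr 1
    rw [Finset.sum_sigma']
    have hsplit : ∀ i : Fin (s + 1 + 1) → ℕ, ∀ j : ℕ, i 1 = 0 →
        j + ∑ m : Fin (s + 1 + 1), m.1 * i m =
          ∑ m : Fin (s + 1 + 1), m.1 * (i + (Pi.single 1 j : Fin (s + 1 + 1) → ℕ)) m := by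
      intro i j h
      rw [add_comm]
      simp [mul_add, Finset.sum_add_distrib, Pi.single_apply]
    have hup : ∀ i : Fin (s + 1 + 1) → ℕ, Function.update i 1 0 + Pi.single 1 (i 1) = i := by
      intro i
      ext l
      by_cases hl : l = 1
      · subst hl; simp
      · simp [hl]
    have h01 : (0 : Fin (s + 1 + 1)) ≠ 1 := by simp
    refine Finset.sum_bij' (fun x _ => x.2 + Pi.single 1 x.1)
      (fun i _ => ⟨i 1, Function.update i 1 0⟩) ?_ ?_ ?_ ?_ ?_
    · rintro ⟨j, i⟩ hx
      simp only [Finset.mem_sigma, Finset.mem_filter] at hx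
      obtain ⟨hj, hi, h1, h2⟩ := hx
      rw [mem_WSet le_rfl]
      simp only
      rw [← hsplit i j (h1 1 (by simp))]
      refine ⟨?_, h2⟩
      simp [h1 0 (by simp), h01]
    · intro i hi
      have hi0 := hi
      rw [mem_WSet le_rfl] at hi
      rw [WSet, Finset.mem_filter, Fintype.mem_piFinset] at hi0
      simp only [Finset.mem_sigma, Finset.mem_filter, Fintype.mem_piFinset]
      refine ⟨hi0.1 1, ?_, ?_, ?_⟩
      · intro l
        by_cases hl : l = 1
        · subst hl; simp
        · simpa [hl] using hi0.1 l
      · intro m hm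
        by_cases hl : m = 1
        · subst hl; simp
        · have : m = 0 := by
            apply Fin.ext
            have : m.1 ≠ 1 := fun h => hl (Fin.ext (by simpa using h))
            rw [Fin.val_zero]; omega
          subst this
          simp [hi.1, h01]
      · rw [hsplit _ _ (by simp), hup, hi.2]
    · rintro ⟨j, i⟩ hx
      simp only [Finset.mem_sigma, Finset.mem_filter] at hx
      obtain ⟨hj, hi, h1, h2⟩ := hx
      have h11 : i 1 = 0 := h1 1 (by simp)
      have e1 : (i + (Pi.single 1 j : Fin (s + 1 + 1) → ℕ)) 1 = j := by simp [h11]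
      have e2 : Function.update (i + (Pi.single 1 j : Fin (s + 1 + 1) → ℕ)) 1 0 = i := by
        ext l
        by_cases hl : l = 1
        · subst hl; simp [h11]
        · simp [hl]
      simp only [e1, e2]
    · intro i hi
      exact hup i
    · rintro ⟨j, i⟩ hx
      simp only [Finset.mem_sigma, Finset.mem_filter] at hx
      obtain ⟨hj, hi, h1, h2⟩ := hx
      have h11 : i 1 = 0 := h1 1 (by simp)
      simp only
      rw [← Finset.mul_prod_erase _ _ (Finset.mem_univ (1 : Fin (s + 1 + 1))),
        ← Finset.mul_prod_erase Finset.univ (fun l : Fin (s + 1 + 1) => wfac l.1 ((i + (Pi.single 1 j : Fin (s + 1 + 1) → ℕ)) l))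
          (Finset.mem_univ 1), mul_comm, ← mul_assoc]
      congr 1
      · simp [h11, wfac, Epoly]
      · apply Finset.prod_congr rfl
        intro l hl
        have hl1 := Finset.ne_of_mem_erase hl
        have e : (i + (Pi.single 1 j : Fin (s + 1 + 1) → ℕ)) l = i l := by simp [hl1]
        rw [e]
        by_cases hl0 : l = 0
        · subst hl0
          simp [h1 0 (by simp), wfac]
        · have : l.1 ≠ 1 := fun h => hl1 (Fin.ext (by simpa using h))
          rw [wfac, Epoly, if_neg this, ← Polynomial.C_mul, ← Polynomial.C_pow, ← Polynomial.C_mul]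
          congr 1
          rw [div_eq_mul_inv, div_eq_mul_inv]
          ring

/-- For an index `K` of positive integers, not all `1`, and `B = {j : k_j = 1}`:
`Σ_{Π ∈ P(r)} c̄(Π) H(K;Π;T)
  = Σ_{A ⊆ B} Σ_{Δ ∈ P_B({1,…,r}∖A)} c̄(Δ) (∏_{Q ∈ Δ} ζ(Σ_{q ∈ Q} k_q)) G_{|A|}(T)`. -/
theorem harmonic_sum_decomposition {r : ℕ} (k : Fin r → ℕ) (hk : ∀ i, 1 ≤ k i)
    (hK : ¬ ∀ i, k i = 1)
    (B : Finset (Fin r)) (hB : B = Finset.univ.filter (fun j => k j = 1)) :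
    ∑ π ∈ partitionsOf (Finset.univ : Finset (Fin r)),
        (cbar π : Polynomial ℝ) * Hpoly k π =
      ∑ A ∈ B.powerset,
        ∑ Δ ∈ partitionsAvoiding B (Finset.univ \ A),
          (cbar Δ : Polynomial ℝ) *
            (∏ Q ∈ Δ, Polynomial.C (zetaVal (∑ q ∈ Q, k q))) *
              Gpoly A.card := by
  have hF : ∀ A : Finset (Fin r), ∑ π ∈ partitionsOf A,
      ∏ P ∈ π, (((P.card - 1).factorial : ℕ) : Polynomial ℝ) * Epoly P.card = Gpoly A.card := by
    intro A
    rw [Gpoly_eq]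
    exact po_card Epoly (Wsum A.card) A.card (Wsum_zero _) (Wsum_rec _) _ le_rfl A rfl
  have hkB : ∀ P : Finset (Fin r), P ⊆ B → ∑ p ∈ P, k p = P.card := by
    intro P hP
    rw [Finset.card_eq_sum_ones]
    apply Finset.sum_congr rfl
    intro x hx
    have := hP hx
    rw [hB, Finset.mem_filter] at this
    exact this.2
  have hkn : ∀ P : Finset (Fin r), ¬ P ⊆ B → ∑ p ∈ P, k p ≠ 1 := by
    intro P hP h
    obtain ⟨x, hx, hxB⟩ := Finset.not_subset.1 hP
    have h1 : k x ≤ ∑ p ∈ P, k p := Finset.single_le_sum (fun _ _ => Nat.zero_le _) hx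
    have h2 : k x ≠ 1 := by
      intro h2
      apply hxB
      rw [hB, Finset.mem_filter]
      exact ⟨Finset.mem_univ _, h2⟩
    have := hk x
    omega
  have hL : ∀ π : Finset (Finset (Fin r)), (cbar π : Polynomial ℝ) * Hpoly k π =
      ∏ P ∈ π, (((P.card - 1).factorial : ℕ) : Polynomial ℝ) * Epoly (∑ q ∈ P, k q) := by
    intro π
    rw [cbar, Hpoly, Nat.cast_prod, Finset.prod_mul_distrib]
  simp only [hL]
  rw [po_subset Finset.univ B (Finset.subset_univ B)]
  apply Finset.sum_congr rfl
  intro A hA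
  rw [Finset.mem_powerset] at hA
  rw [← hF A, ← Finset.sum_mul]
  congr 1
  · apply Finset.sum_congr rfl
    intro Δ hΔ
    rw [cbar, Nat.cast_prod, ← Finset.prod_mul_distrib]
    apply Finset.prod_congr rfl
    intro Q hQ
    rw [Epoly, if_neg (hkn Q (avoid_not_subset hΔ Q hQ))]
  · apply Finset.sum_congr rfl
    intro σ hσ
    apply Finset.prod_congr rfl
    intro P hP
    rw [hkB P]
    refine subset_trans ?_ hA
    rw [← (mem_po.1 hσ).2.2]
    exact Finset.subset_biUnion_of_mem id hP
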